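/- Let s ≥ 2, ϑ ≥ 0, and take the second-order RKC2 coefficients: ω0 = 1 + ϑ/s², ω1 = T_s′(ω0)/T_s″(ω0), b_j = T_j″(ω0)/T_j′(ω0)² for 2 ≤ j ≤ s, b_0 = b_1 = b_2, a_j = 1 − b_j T_j(ω0), with μ_j, ν_j, κ_j, γ_j the RKC coefficients. Set C_s = Σ_{j=1}^{s} (b_s/b_j) U_{s−j}(ω0) μ_j. Let f : ℝⁿ → ℝⁿ be twice continuously differentiable with ‖f″(x)‖ ≤ C_{f″} for all x. Let yⁿ, ŷⁿ ∈ ℝⁿ and Δt > 0, and assume the Jacobian matrix J of f at yⁿ is symmetric with all eigenvalues in [−ρ, 0], where Δt·ρ ≤ 2ω0/ω1. Define the exact RKC step: d_0 = 0, d_1 = μ_1 Δt f(yⁿ), d_j = ν_j d_{j−1} + κ_j d_{j−2} + μ_j Δt f(yⁿ + d_{j−1}) + γ_j Δt f(yⁿ), y^{n+1} = yⁿ + d_s; and the mixed-precision step: d̂_0 = 0, d̂_1 = μ_1 Δt f(ŷⁿ), d̂_j = ν_j d̂_{j−1} + κ_j d̂_{j−2} + μ_j Δt (f(ŷⁿ)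 + Δ̂f_{j−1}) + γ_j Δt f(ŷⁿ), ŷ^{n+1} = ŷⁿ + d̂_s. Assume for all 1 ≤ j ≤ s−1: ‖Δ̂f_j − (f(ŷⁿ + d̂_j) − f(ŷⁿ))‖₂ ≤ min(Ĉ ε Δt, C_Δ ‖ŷⁿ‖₂), ‖d̂_j‖₂ ≤ C_d · min(Δt ‖f(ŷⁿ)‖₂, ‖ŷⁿ‖₂) and ‖d_j‖₂ ≤ C_d · min(Δt ‖f(yⁿ)‖₂, ‖yⁿ‖₂), for constants Ĉ, ε, C_Δ, C_d ≥ 0. Then ‖ŷ^{n+1} − y^{n+1}‖₂ ≤ ‖ŷⁿ − yⁿ‖₂ + C_{f″}(1 + 2C_s) ‖ŷⁿ − yⁿ‖₂² Δt + C_s min(Ĉ ε Δt, C_Δ ‖ŷⁿ‖₂) Δt + C_s C_{f″} C_d² ( min(Δt ‖f(ŷⁿ)‖₂, ‖ŷⁿ‖₂)² + min(Δt ‖f(yⁿ)‖₂, ‖yⁿ‖₂)² ) Δt. -/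

import Mathlib

noncomputable section

/-- Chebyshev polynomial of the first kind, evaluated in an arbitrary ring. -/
def chebT (R : Type*) [Ring R] : ℕ → R → R
  | 0, _ => 1
  | 1, x => x
  | n + 2, x => 2 * x * chebT R (n + 1) x - chebT R n x

/-- Chebyshev polynomial of the second kind, evaluated in an arbitrary ring. -/
def chebU (R : Type*) [Ring R] : ℕ → R → R
  | 0, _ => 1
  | 1, x => 2 * x
  | n + 2, x => 2 * x * chebU R (n + 1) x - chebU R n x

/-- Spectral norm of a real matrix: operator norm induced by the Euclidean norms. -/
def specNorm {m n : ℕ} (A : Matrix (Fin m) (Fin n) ℝ) : ℝ :=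
  ‖(Matrix.toEuclideanLin A).toContinuousLinearMap‖

open Polynomial

theorem chebT_eq_eval_T (k : ℕ) (x : ℝ) : chebT ℝ k x = (Chebyshev.T ℝ k).eval x := by
  induction k using Nat.twoStepInduction with
  | zero => simp [chebT]
  | one => simp [chebT]
  | more k ih₀ ih₁ =>
    have h := Chebyshev.T_add_two ℝ (k : ℤ)
    push_cast at ih₁ ⊢
    rw [chebT, h, ih₀, ih₁]
    simp

theorem chebU_eq_eval_U (k : ℕ) (x : ℝ) : chebU ℝ k x = (Chebyshev.U ℝ k).eval x := by
  induction k using Nat.twoStepInduction with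
  | zero => simp [chebU]
  | one => simp [chebU]
  | more k ih₀ ih₁ =>
    have h := Chebyshev.U_add_two ℝ (k : ℤ)
    push_cast at ih₁ ⊢
    rw [chebU, h, ih₀, ih₁]
    simp

theorem deriv_chebT (k : ℕ) :
    deriv (fun x => chebT ℝ k x) = fun x => (derivative (Chebyshev.T ℝ k)).eval x := by
  funext x
  simp [chebT_eq_eval_T]

theorem deriv_deriv_chebT (k : ℕ) :
    deriv (deriv (fun x => chebT ℝ k x)) =
      fun x => (derivative^[2] (Chebyshev.T ℝ k)).eval x := by
  funext x
  simp [deriv_chebT]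

theorem abs_chebT_le_chebT (k : ℕ) {w x : ℝ} (hx : 1 ≤ x) (hw : |w| ≤ x) :
    |chebT ℝ k w| ≤ chebT ℝ k x := by
  simp only [chebT_eq_eval_T]
  rcases le_total |w| 1 with h | h
  · exact (Chebyshev.abs_eval_T_real_le_one k h).trans (Chebyshev.one_le_eval_T_real k hx)
  · have habs : |(Chebyshev.T ℝ k).eval w| = |(Chebyshev.T ℝ k).eval (|w|)| := by
      rcases abs_choice w with h' | h' <;> rw [h']
      simp [Chebyshev.T_eval_neg, abs_mul]
    have harcosh : Real.arcosh |w| ≤ Real.arcosh x := by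
      rwa [Real.arcosh_le_arcosh (by linarith) (by linarith)]
    have hnn : 0 ≤ Real.arcosh |w| := Real.arcosh_nonneg h
    rw [habs, ← Real.cosh_arcosh h, ← Real.cosh_arcosh hx, Chebyshev.T_real_cosh,
      Chebyshev.T_real_cosh, abs_of_pos (Real.cosh_pos _), Real.cosh_le_cosh, abs_mul, abs_mul,
      abs_of_nonneg hnn, abs_of_nonneg (hnn.trans harcosh)]
    gcongr

theorem chebU_succ (k : ℕ) (x : ℝ) : chebU ℝ (k + 1) x = x * chebU ℝ k x + chebT ℝ (k + 1) x := by
  have h := Chebyshev.U_eq_X_mul_U_add_T ℝ (k : ℤ)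
  simp only [chebT_eq_eval_T, chebU_eq_eval_U]
  push_cast
  rw [h]
  simp

theorem abs_chebU_le_chebU (k : ℕ) {w x : ℝ} (hx : 1 ≤ x) (hw : |w| ≤ x) :
    |chebU ℝ k w| ≤ chebU ℝ k x := by
  induction k with
  | zero => simp [chebU]
  | succ k ih =>
    rw [chebU_succ, chebU_succ]
    refine (abs_add_le _ _).trans (add_le_add ?_ (abs_chebT_le_chebT _ hx hw))
    rw [abs_mul]
    gcongr

theorem two_le_deriv_deriv_T {k : ℕ} (hk : 2 ≤ k) {x : ℝ} (hx : 1 ≤ x) :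
    2 ≤ (derivative^[2] (Chebyshev.T ℝ k)).eval x := by
  have h := Chebyshev.eval_iterate_derivative_le_of_forall_abs_le_one (n := k) (P := X ^ 2)
    (k := 2) hx (by simpa using hk)
    (fun y hy => by
      rw [eval_pow, eval_X, abs_of_nonneg (sq_nonneg y)]
      exact (sq_le_one_iff_abs_le_one y).2 (abs_le.2 hy))
  norm_num at h ⊢
  exact h

theorem sq_le_deriv_T (k : ℕ) {x : ℝ} (hx : 1 ≤ x) :
    (k : ℝ) ^ 2 ≤ (derivative (Chebyshev.T ℝ k)).eval x := by
  have hmono : MonotoneOn (fun y => (derivative (Chebyshev.T ℝ k)).eval y) (Set.Ici 1) := by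
    refine monotoneOn_of_deriv_nonneg (convex_Ici 1) (Polynomial.continuous _).continuousOn
      (Polynomial.differentiable _).differentiableOn fun y hy => ?_
    have h := Chebyshev.eval_iterate_derivative_le_of_forall_abs_le_one (n := k) (P := 0)
      (k := 2) (x := y) (by simpa using interior_subset hy) (by simp) (by simp)
    simpa using h
  simpa [Chebyshev.derivative_T_eval_one] using hmono (Set.mem_Ici.2 le_rfl) hx hx

/-- The differential form of the Pell identity for Chebyshev polynomials. -/
theorem sq_sub_one_mul_deriv_T_sq (k : ℕ) {x : ℝ} (hx : 1 ≤ x) :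
    (x ^ 2 - 1) * (derivative (Chebyshev.T ℝ k)).eval x ^ 2 =
      (k : ℝ) ^ 2 * ((Chebyshev.T ℝ k).eval x ^ 2 - 1) := by
  rw [← Real.cosh_arcosh hx]
  have hU := Chebyshev.U_real_cosh (Real.arcosh x) ((k : ℤ) - 1)
  have hT := Chebyshev.T_real_cosh (Real.arcosh x) k
  push_cast at hU hT
  rw [sub_add_cancel] at hU
  rw [Chebyshev.T_derivative_eq_U, eval_mul, hT]
  have h₁ := Real.cosh_sq (Real.arcosh x)
  have h₂ := Real.cosh_sq ((k : ℝ) * Real.arcosh x)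
  rw [h₁, h₂, ← hU]
  simp only [Int.cast_natCast, eval_natCast]
  ring

/-- Chebyshev polynomials are logarithmically concave on `[1, ∞)`. -/
theorem T_mul_deriv_deriv_T_le (k : ℕ) {x : ℝ} (hx : 1 ≤ x) :
    (Chebyshev.T ℝ k).eval x * (derivative^[2] (Chebyshev.T ℝ k)).eval x ≤
      (derivative (Chebyshev.T ℝ k)).eval x ^ 2 := by
  rcases hx.eq_or_lt with rfl | hlt
  · rw [Chebyshev.iterate_derivative_T_eval_one_eq_div, Chebyshev.derivative_T_eval_one]
    simp [Finset.prod_range_succ]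
    nlinarith [sq_nonneg ((k : ℝ) ^ 2), sq_nonneg (k : ℝ)]
  · have hode := Chebyshev.one_sub_X_sq_mul_iterate_derivative_T_eval (R := ℝ) k 0 x
    have hpell := sq_sub_one_mul_deriv_T_sq k hx
    have hT := Chebyshev.one_le_eval_T_real k hx
    have hT' := sq_le_deriv_T k hx
    simp at hode
    have hpos : 0 < x ^ 2 - 1 := by nlinarith
    refine le_of_mul_le_mul_left ?_ hpos
    rw [hpell]
    simp
    set t := (Chebyshev.T ℝ k).eval x
    set t' := (derivative (Chebyshev.T ℝ k)).eval x
    set t'' := (derivative (derivative (Chebyshev.T ℝ k))).eval x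
    have hxt : 1 ≤ x * t := one_le_mul_of_one_le_of_one_le hx hT
    have : (x ^ 2 - 1) * (t * t'') = (k : ℝ) ^ 2 * t ^ 2 - x * t * t' := by
      linear_combination (-t) * hode
    rw [this]
    nlinarith [mul_le_mul hxt hT' (by positivity) (by positivity)]

theorem norm_le_mul_norm_of_abs_inner_le {ι E : Type*} [Fintype ι] [NormedAddCommGroup E]
    [InnerProductSpace ℝ E] (B : OrthonormalBasis ι ℝ E) {v w : E} {M : ℝ} (hM : 0 ≤ M)
    (h : ∀ i, |inner ℝ (B i) v| ≤ M * |inner ℝ (B i) w|) : ‖v‖ ≤ M * ‖w‖ := by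
  refine le_of_sq_le_sq ?_ (by positivity)
  rw [mul_pow, ← B.sum_sq_norm_inner_right, ← B.sum_sq_norm_inner_right, Finset.mul_sum]
  refine Finset.sum_le_sum fun i _ => ?_
  rw [← mul_pow]
  exact pow_le_pow_left₀ (norm_nonneg _) (h i) 2

theorem chebT_end_eigenfunctional {E : Type*} [AddCommGroup E] [Module ℝ E]
    (W : Module.End ℝ E) (φ : E →ₗ[ℝ] ℝ) (w : ℝ) (h : ∀ v, φ (W v) = w * φ v) (k : ℕ) (v : E) :
    φ (chebT (Module.End ℝ E) k W v) = chebT ℝ k w * φ v := by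
  induction k using Nat.twoStepInduction with
  | zero => simp [chebT]
  | one => simp [chebT, h]
  | more k ih₀ ih₁ => simp [chebT, two_mul, add_mul, h, ih₀, ih₁]; ring

theorem chebU_end_eigenfunctional {E : Type*} [AddCommGroup E] [Module ℝ E]
    (W : Module.End ℝ E) (φ : E →ₗ[ℝ] ℝ) (w : ℝ) (h : ∀ v, φ (W v) = w * φ v) (k : ℕ) (v : E) :
    φ (chebU (Module.End ℝ E) k W v) = chebU ℝ k w * φ v := by
  induction k using Nat.twoStepInduction with
  | zero => simp [chebU]
  | one => simp [chebU, two_mul, h]; ring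
  | more k ih₀ ih₁ => simp [chebU, two_mul, add_mul, h, ih₀, ih₁]; ring

/-- Discrete Duhamel formula for the inhomogeneous Chebyshev recurrence. -/
theorem eq_sum_chebU_of_recurrence {E : Type*} [AddCommGroup E] [Module ℝ E]
    (W : Module.End ℝ E) (s : ℕ) (x g : ℕ → E) (h₀ : x 0 = 0) (h₁ : x 1 = g 1)
    (h : ∀ j, j + 2 ≤ s → x (j + 2) = (2 : ℝ) • W (x (j + 1)) - x j + g (j + 2))
    (j : ℕ) (hj : j ≤ s) :
    x j = ∑ i ∈ Finset.Icc 1 j, chebU (Module.End ℝ E) (j - i) W (g i) := by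
  induction j using Nat.twoStepInduction with
  | zero => simp [h₀]
  | one => simp [h₁, chebU]
  | more j ih₀ ih₁ =>
    have hsum : ∑ i ∈ Finset.Icc 1 j, chebU (Module.End ℝ E) (j + 2 - i) W (g i) =
        ∑ i ∈ Finset.Icc 1 j, ((2 : ℝ) • W (chebU (Module.End ℝ E) (j + 1 - i) W (g i)) -
          chebU (Module.End ℝ E) (j - i) W (g i)) := by
      refine Finset.sum_congr rfl fun i hi => ?_
      obtain ⟨m, rfl⟩ := Nat.exists_eq_add_of_le (Finset.mem_Icc.1 hi).2
      rw [show i + m + 2 - i = m + 2 by omega, show i + m + 1 - i = m + 1 by omega,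
        show i + m - i = m by omega]
      simp [chebU, two_mul, add_mul, two_smul]
    rw [h j hj, ih₁ (by omega), ih₀ (by omega), Finset.sum_Icc_succ_top (by omega),
      Finset.sum_Icc_succ_top (by omega), Finset.sum_Icc_succ_top (by omega), hsum,
      Finset.sum_sub_distrib, ← Finset.smul_sum, ← map_sum]
    simp [show j + 2 - (j + 1) = 1 by omega, chebU, two_mul, two_smul]
    abel

/-- Second-order Taylor estimate for a map with bounded second derivative. -/
theorem norm_taylor_remainder_le {E F : Type*} [NormedAddCommGroup E] [NormedSpace ℝ E]
    [NormedAddCommGroup F] [NormedSpace ℝ F] {f : E → F} (hf : ContDiff ℝ 2 f) {C : ℝ}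
    (hC : ∀ x, ‖iteratedFDeriv ℝ 2 f x‖ ≤ C) {y : E} {f' : E →L[ℝ] F} (hf' : HasFDerivAt f f' y)
    (v : E) : ‖f (y + v) - f y - f' v‖ ≤ C / 2 * ‖v‖ ^ 2 := by
  have hdiff : Differentiable ℝ f := hf.differentiable (by norm_num)
  have hdiff' : Differentiable ℝ (fderiv ℝ f) :=
    (hf.fderiv_right (m := 1) (by norm_num)).differentiable (by norm_num)
  have hlip : ∀ z, ‖fderiv ℝ f z - f'‖ ≤ C * ‖z - y‖ := fun z => by
    rw [← hf'.fderiv]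
    refine convex_univ.norm_image_sub_le_of_norm_fderiv_le (𝕜 := ℝ)
      (fun x _ => hdiff' x) (fun x _ => ?_) (Set.mem_univ _) (Set.mem_univ _)
    rw [← norm_iteratedFDeriv_one, norm_iteratedFDeriv_fderiv]
    exact hC x
  have hline : ∀ t : ℝ, HasDerivAt (fun t : ℝ => f (y + t • v) - f y - t • f' v)
      (fderiv ℝ f (y + t • v) v - f' v) t := fun t => by
    have h₁ : HasDerivAt (fun t : ℝ => y + t • v) v t := by
      simpa using ((hasDerivAt_id t).smul_const v).const_add y
    have h₂ := (hdiff (y + t • v)).hasFDerivAt.comp_hasDerivAt t h₁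
    simpa using (h₂.sub_const (f y)).fun_sub ((hasDerivAt_id t).smul_const (f' v))
  have hmain := image_norm_le_of_norm_deriv_right_le_deriv_boundary
    (f := fun t : ℝ => f (y + t • v) - f y - t • f' v)
    (f' := fun t => fderiv ℝ f (y + t • v) v - f' v)
    (B := fun t => C / 2 * ‖v‖ ^ 2 * t ^ 2) (B' := fun t => C * ‖v‖ ^ 2 * t) (a := 0) (b := 1)
    (fun t _ => (hline t).continuousAt.continuousWithinAt)
    (fun t _ => (hline t).hasDerivWithinAt) (by simp)
    (fun t => by
      refine ((hasDerivAt_pow 2 t).const_mul (C / 2 * ‖v‖ ^ 2)).congr_deriv ?_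
      push_cast
      ring)
    (fun t ht => by
      calc ‖fderiv ℝ f (y + t • v) v - f' v‖
          = ‖(fderiv ℝ f (y + t • v) - f') v‖ := by simp
        _ ≤ ‖fderiv ℝ f (y + t • v) - f'‖ * ‖v‖ := ContinuousLinearMap.le_opNorm _ _
        _ ≤ C * ‖y + t • v - y‖ * ‖v‖ := by gcongr; exact hlip _
        _ = C * ‖v‖ ^ 2 * t := by
          rw [add_sub_cancel_left, norm_smul, Real.norm_of_nonneg ht.1]
          ring)
  simpa using hmain (Set.right_mem_Icc.2 zero_le_one)

/-- Representation of the linearised error of a Runge–Kutta–Chebyshev step: `e` is propagated by the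
stability polynomial, and the perturbation `g i` of stage `i` by a Chebyshev polynomial of the
second kind. -/
theorem rkc_error_eq {E : Type*} [AddCommGroup E] [Module ℝ E] (L W : Module.End ℝ E) {s : ℕ}
    (hs : 1 ≤ s) {ω0 ω1 Δt : ℝ} {b μ ν κ γ : ℕ → ℝ} (hW : W = ω0 • 1 + (ω1 * Δt) • L)
    (hb : ∀ j, j ≤ s → b j ≠ 0) (hμ1 : μ 1 = b 1 * ω1)
    (hμ : ∀ j, 2 ≤ j → j ≤ s → μ j = 2 * ω1 * b j / b (j - 1))
    (hν : ∀ j, 2 ≤ j → j ≤ s → ν j = 2 * ω0 * b j / b (j - 1))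
    (hκ : ∀ j, 2 ≤ j → j ≤ s → κ j = -(b j / b (j - 2)))
    (hγ : ∀ j, 2 ≤ j → j ≤ s → γ j = -(μ j * (1 - b (j - 1) * chebT ℝ (j - 1) ω0)))
    (e r : E) (ξ D g : ℕ → E) (hD0 : D 0 = 0) (hD1 : D 1 = (μ 1 * Δt) • (L e + r))
    (hD : ∀ j, 2 ≤ j → j ≤ s → D j = ν j • D (j - 1) + κ j • D (j - 2) +
      (μ j * Δt) • (L (e + D (j - 1)) + ξ (j - 1)) + (γ j * Δt) • (L e + r))
    (hg1 : g 1 = (μ 1 * Δt) • r)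
    (hg : ∀ j, 2 ≤ j → j ≤ s → g j = (μ j * Δt) • ξ (j - 1) + (γ j * Δt) • r) :
    e + D s = (1 - b s * chebT ℝ s ω0) • e + b s • chebT (Module.End ℝ E) s W e +
      ∑ i ∈ Finset.Icc 1 s, (b s / b i) • chebU (Module.End ℝ E) (s - i) W (g i) := by
  have hWv : ∀ v, W v = ω0 • v + (ω1 * Δt) • L v := fun v => by simp [hW]
  have hmain := eq_sum_chebU_of_recurrence W s
    (fun j => (b j)⁻¹ • (D j + (b j * chebT ℝ j ω0) • e) - chebT (Module.End ℝ E) j W e)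
    (fun j => (b j)⁻¹ • g j) ?_ ?_ ?_ s le_rfl
  · have hbs := hb s le_rfl
    have hsum : ∑ i ∈ Finset.Icc 1 s, (b s / b i) • chebU (Module.End ℝ E) (s - i) W (g i) =
        b s • ∑ i ∈ Finset.Icc 1 s, chebU (Module.End ℝ E) (s - i) W ((b i)⁻¹ • g i) := by
      rw [Finset.smul_sum]
      exact Finset.sum_congr rfl fun i _ => by rw [map_smul, smul_smul, div_eq_mul_inv]
    rw [hsum, ← hmain]
    simp only [smul_sub, smul_smul, mul_inv_cancel₀ hbs]
    module
  · have := hb 0 (by omega)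
    simp [hD0, chebT, smul_smul, this]
  · have := hb 1 hs
    simp only [hD1, hμ1, hg1, chebT, hWv]
    (match_scalars <;> field_simp) <;> ring
  · intro j hj
    have h₀ := hb j (by omega)
    have h₁ := hb (j + 1) (by omega)
    have h₂ := hb (j + 2) (by omega)
    have hT : chebT (Module.End ℝ E) (j + 2) W e =
        (2 : ℝ) • W (chebT (Module.End ℝ E) (j + 1) W e) - chebT (Module.End ℝ E) j W e := by
      simp [chebT, two_mul, add_mul, two_smul]
    have hT' : chebT ℝ (j + 2) ω0 = 2 * ω0 * chebT ℝ (j + 1) ω0 - chebT ℝ j ω0 := by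
      rw [chebT]
    have e₁ : j + 2 - 1 = j + 1 := by omega
    have e₂ : j + 2 - 2 = j := by omega
    have hμj := hμ (j + 2) (by omega) hj
    have hγj := hγ (j + 2) (by omega) hj
    rw [e₁] at hμj hγj
    simp only [hT, hT', hD (j + 2) (by omega) hj, hg (j + 2) (by omega) hj, hν (j + 2) (by omega) hj,
      hκ (j + 2) (by omega) hj, hγj, hμj, e₁, e₂, hWv, map_add, map_sub, map_smul]
    (match_scalars <;> field_simp) <;> ring

/-- Signs and sizes of the coefficients of the second-order Runge–Kutta–Chebyshev method. -/
theorem rkc2_coefficient_bounds {s : ℕ} (hs : 2 ≤ s) {ω0 ω1 : ℝ} {b μ γ : ℕ → ℝ} (hω0' : 1 ≤ ω0)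
    (hω1 : ω1 = deriv (fun x => chebT ℝ s x) ω0 / deriv (deriv (fun x => chebT ℝ s x)) ω0)
    (hb : ∀ j, 2 ≤ j → j ≤ s →
      b j = deriv (deriv (fun x => chebT ℝ j x)) ω0 / (deriv (fun x => chebT ℝ j x) ω0) ^ 2)
    (hb0 : b 0 = b 2) (hb1 : b 1 = b 2) (hμ1 : μ 1 = b 1 * ω1)
    (hμ : ∀ j, 2 ≤ j → j ≤ s → μ j = 2 * ω1 * b j / b (j - 1))
    (hγ : ∀ j, 2 ≤ j → j ≤ s → γ j = -(μ j * (1 - b (j - 1) * chebT ℝ (j - 1) ω0))) :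
    0 < ω1 ∧ (∀ j, j ≤ s → 0 < b j) ∧ (∀ j, 1 ≤ j → j ≤ s → b j * chebT ℝ j ω0 ≤ 1) ∧
      (∀ j, 1 ≤ j → j ≤ s → 0 < μ j) ∧ ∀ j, 2 ≤ j → j ≤ s → |γ j| ≤ μ j := by
  have hT' : ∀ j, 2 ≤ j → 0 < deriv (fun x => chebT ℝ j x) ω0 := fun j hj => by
    have hj' : (0 : ℝ) < (j : ℝ) ^ 2 := by positivity
    rw [deriv_chebT]
    exact hj'.trans_le (sq_le_deriv_T j hω0')
  have hT'' : ∀ j, 2 ≤ j → 0 < deriv (deriv (fun x => chebT ℝ j x)) ω0 := fun j hj => by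
    rw [deriv_deriv_chebT]
    exact two_pos.trans_le (two_le_deriv_deriv_T hj hω0')
  have hω1' : 0 < ω1 := by rw [hω1]; exact div_pos (hT' s hs) (hT'' s hs)
  have hTpos : ∀ j, 0 < chebT ℝ j ω0 := fun j => by
    rw [chebT_eq_eval_T]
    exact one_pos.trans_le (Chebyshev.one_le_eval_T_real j hω0')
  have hbpos' : ∀ j, 2 ≤ j → j ≤ s → 0 < b j := fun j hj hjs => by
    rw [hb j hj hjs]
    have := hT' j hj
    have := hT'' j hj
    positivity
  have hbpos : ∀ j, j ≤ s → 0 < b j := fun j hjs => by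
    match j with
    | 0 => rw [hb0]; exact hbpos' 2 le_rfl hs
    | 1 => rw [hb1]; exact hbpos' 2 le_rfl hs
    | j + 2 => exact hbpos' (j + 2) (by omega) hjs
  have hbT' : ∀ j, 2 ≤ j → j ≤ s → b j * chebT ℝ j ω0 ≤ 1 := fun j hj hjs => by
    rw [hb j hj hjs, div_mul_eq_mul_div, div_le_one (pow_pos (hT' j hj) 2), deriv_deriv_chebT,
      deriv_chebT, chebT_eq_eval_T, mul_comm]
    exact T_mul_deriv_deriv_T_le j hω0'
  have hbT : ∀ j, 1 ≤ j → j ≤ s → b j * chebT ℝ j ω0 ≤ 1 := fun j hj hjs => by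
    rcases hj.eq_or_lt with rfl | hj
    · refine le_trans ?_ (hbT' 2 le_rfl hs)
      rw [hb1]
      refine mul_le_mul_of_nonneg_left ?_ (hbpos 2 hs).le
      simp only [chebT]
      nlinarith
    · exact hbT' j hj hjs
  have hμpos : ∀ j, 1 ≤ j → j ≤ s → 0 < μ j := fun j hj hjs => by
    rcases hj.eq_or_lt with rfl | hj
    · rw [hμ1]; exact mul_pos (hbpos 1 hjs) hω1'
    · rw [hμ j hj hjs]
      have := hbpos j hjs
      have := hbpos (j - 1) (by omega)
      positivity
  have hγle : ∀ j, 2 ≤ j → j ≤ s → |γ j| ≤ μ j := fun j hj hjs => by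
    have h₁ := hμpos j (by omega) hjs
    have h₂ := hbT (j - 1) (by omega) (by omega)
    have h₃ := mul_pos (hbpos (j - 1) (by omega)) (hTpos (j - 1))
    rw [hγ j hj hjs, abs_neg, abs_of_nonneg (mul_nonneg h₁.le (by linarith))]
    exact mul_le_of_le_one_right h₁.le (by linarith)
  exact ⟨hω1', hbpos, hbT, hμpos, hγle⟩

theorem chebU_nonneg (k : ℕ) {x : ℝ} (hx : 1 ≤ x) : 0 ≤ chebU ℝ k x :=
  (abs_nonneg _).trans (abs_chebU_le_chebU k hx (abs_of_pos (by linarith)).le)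

theorem norm_chebU_apply_le {ι E : Type*} [Fintype ι] [NormedAddCommGroup E]
    [InnerProductSpace ℝ E] (B : OrthonormalBasis ι ℝ E) {W : Module.End ℝ E} {w : ι → ℝ}
    (hW : ∀ i v, inner ℝ (B i) (W v) = w i * inner ℝ (B i) v) {x : ℝ} (hx : 1 ≤ x)
    (hw : ∀ i, |w i| ≤ x) (k : ℕ) (v : E) :
    ‖chebU (Module.End ℝ E) k W v‖ ≤ chebU ℝ k x * ‖v‖ := by
  refine norm_le_mul_norm_of_abs_inner_le B (chebU_nonneg k hx) fun i => ?_
  have h : inner ℝ (B i) (chebU (Module.End ℝ E) k W v) = chebU ℝ k (w i) * inner ℝ (B i) v :=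
    chebU_end_eigenfunctional W (innerₛₗ ℝ (B i)) (w i) (hW i) k v
  rw [h, abs_mul]
  exact mul_le_mul_of_nonneg_right (abs_chebU_le_chebU k hx (hw i)) (abs_nonneg _)

/-- Stability of the shifted Chebyshev polynomial `1 - β T_k(x) + β T_k`. -/
theorem norm_stability_polynomial_apply_le {ι E : Type*} [Fintype ι] [NormedAddCommGroup E]
    [InnerProductSpace ℝ E] (B : OrthonormalBasis ι ℝ E) {W : Module.End ℝ E} {w : ι → ℝ}
    (hW : ∀ i v, inner ℝ (B i) (W v) = w i * inner ℝ (B i) v) {x : ℝ} (hx : 1 ≤ x)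
    (hw : ∀ i, |w i| ≤ x) (k : ℕ) {β : ℝ} (hβ : 0 ≤ β) (hβT : β * chebT ℝ k x ≤ 1) (v : E) :
    ‖(1 - β * chebT ℝ k x) • v + β • chebT (Module.End ℝ E) k W v‖ ≤ ‖v‖ := by
  rw [← one_mul ‖v‖]
  refine norm_le_mul_norm_of_abs_inner_le B zero_le_one fun i => ?_
  have h : inner ℝ (B i) (chebT (Module.End ℝ E) k W v) = chebT ℝ k (w i) * inner ℝ (B i) v :=
    chebT_end_eigenfunctional W (innerₛₗ ℝ (B i)) (w i) (hW i) k v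
  rw [inner_add_right, inner_smul_right, inner_smul_right, h, ← mul_assoc, ← add_mul, abs_mul]
  refine mul_le_mul_of_nonneg_right ?_ (abs_nonneg _)
  obtain ⟨h₁, h₂⟩ := abs_le.1 (abs_chebT_le_chebT k hx (hw i))
  rw [abs_le]
  constructor <;> nlinarith

theorem inner_eigenvectorBasis_toEuclideanLin {n : ℕ} {J : Matrix (Fin n) (Fin n) ℝ}
    (hJ : J.IsHermitian) (i : Fin n) (v : EuclideanSpace ℝ (Fin n)) :
    inner ℝ (hJ.eigenvectorBasis i) (Matrix.toEuclideanLin J v) =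
      hJ.eigenvalues i * inner ℝ (hJ.eigenvectorBasis i) v := by
  have hsymm := Matrix.isSymmetric_toEuclideanLin_iff.mpr hJ
  have hBi : Matrix.toEuclideanLin J (hJ.eigenvectorBasis i) =
      hJ.eigenvalues i • hJ.eigenvectorBasis i := by
    ext k
    simpa [Matrix.toLpLin_apply] using congrFun (hJ.mulVec_eigenvectorBasis i) k
  rw [← hsymm (hJ.eigenvectorBasis i) v, hBi, inner_smul_left]
  simp


/-- Error bound for a perturbed Runge–Kutta–Chebyshev step in terms of bounds `M` for the
perturbations and `mh`, `m` for the internal stages. -/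
theorem rkc_step_error_le {ι E : Type*} [Fintype ι] [NormedAddCommGroup E] [InnerProductSpace ℝ E]
    {s : ℕ} (hs : 1 ≤ s) {ω0 ω1 Δt : ℝ} {b μ ν κ γ : ℕ → ℝ} (hω0' : 1 ≤ ω0) (hΔt : 0 < Δt)
    (hbpos : ∀ j, j ≤ s → 0 < b j) (hbT : b s * chebT ℝ s ω0 ≤ 1)
    (hμpos : ∀ j, 1 ≤ j → j ≤ s → 0 < μ j) (hγle : ∀ j, 2 ≤ j → j ≤ s → |γ j| ≤ μ j)
    (hμ1 : μ 1 = b 1 * ω1)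
    (hμ : ∀ j, 2 ≤ j → j ≤ s → μ j = 2 * ω1 * b j / b (j - 1))
    (hν : ∀ j, 2 ≤ j → j ≤ s → ν j = 2 * ω0 * b j / b (j - 1))
    (hκ : ∀ j, 2 ≤ j → j ≤ s → κ j = -(b j / b (j - 2)))
    (hγ : ∀ j, 2 ≤ j → j ≤ s → γ j = -(μ j * (1 - b (j - 1) * chebT ℝ (j - 1) ω0)))
    {Cs : ℝ} (hCs : Cs = ∑ j ∈ Finset.Icc 1 s, b s / b j * chebU ℝ (s - j) ω0 * μ j)
    {f : E → E} (hf : ContDiff ℝ 2 f) {C : ℝ} (hC : ∀ x, ‖iteratedFDeriv ℝ 2 f x‖ ≤ C)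
    {yn yhat : E} {L : E →L[ℝ] E} (hL : HasFDerivAt f L yn)
    (B : OrthonormalBasis ι ℝ E) {l : ι → ℝ}
    (hLB : ∀ i v, inner ℝ (B i) (L v) = l i * inner ℝ (B i) v)
    (hl : ∀ i, |ω0 + ω1 * Δt * l i| ≤ ω0)
    {d dh Δf : ℕ → E} (hd0 : d 0 = 0) (hd1 : d 1 = (μ 1 * Δt) • f yn)
    (hd : ∀ j, 2 ≤ j → j ≤ s →
      d j = ν j • d (j - 1) + κ j • d (j - 2) + (μ j * Δt) • f (yn + d (j - 1))
        + (γ j * Δt) • f yn)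
    (hdh0 : dh 0 = 0) (hdh1 : dh 1 = (μ 1 * Δt) • f yhat)
    (hdh : ∀ j, 2 ≤ j → j ≤ s →
      dh j = ν j • dh (j - 1) + κ j • dh (j - 2) + (μ j * Δt) • (f yhat + Δf (j - 1))
        + (γ j * Δt) • f yhat)
    {M mh m : ℝ} (hM : 0 ≤ M)
    (hΔf : ∀ j, 1 ≤ j → j ≤ s - 1 → ‖Δf j - (f (yhat + dh j) - f yhat)‖ ≤ M)
    (hdhb : ∀ j, 1 ≤ j → j ≤ s - 1 → ‖dh j‖ ≤ mh)
    (hdb : ∀ j, 1 ≤ j → j ≤ s - 1 → ‖d j‖ ≤ m) :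
    ‖yhat + dh s - (yn + d s)‖ ≤ ‖yhat - yn‖ + C * (1 + 2 * Cs) * ‖yhat - yn‖ ^ 2 * Δt
      + Cs * M * Δt + Cs * C * (mh ^ 2 + m ^ 2) * Δt := by
  have hC0 : 0 ≤ C := (norm_nonneg _).trans (hC 0)
  obtain ⟨W, hW⟩ : ∃ W : Module.End ℝ E, W = ω0 • 1 + (ω1 * Δt) • (L : Module.End ℝ E) := ⟨_, rfl⟩
  have hWB : ∀ i v, inner ℝ (B i) (W v) = (ω0 + ω1 * Δt * l i) * inner ℝ (B i) v := fun i v => by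
    simp [hW, inner_add_right, inner_smul_right, hLB]
    ring
  obtain ⟨e, he⟩ : ∃ e, e = yhat - yn := ⟨_, rfl⟩
  obtain ⟨R, hR⟩ : ∃ R : E → E, R = fun v => f (yn + v) - f yn - L v := ⟨_, rfl⟩
  have hRle : ∀ v, ‖R v‖ ≤ C / 2 * ‖v‖ ^ 2 := fun v => by
    rw [hR]
    exact norm_taylor_remainder_le hf hC hL v
  obtain ⟨ξ, hξ⟩ : ∃ ξ : ℕ → E, ξ = fun j =>
    (Δf j - (f (yhat + dh j) - f yhat)) + (R (e + dh j) - R (d j)) := ⟨_, rfl⟩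
  obtain ⟨K, hK⟩ : ∃ K, K = M + C * (‖e‖ ^ 2 + mh ^ 2) + C / 2 * m ^ 2 + C / 2 * ‖e‖ ^ 2 :=
    ⟨_, rfl⟩
  have hξle : ∀ j, 1 ≤ j → j ≤ s - 1 → ‖ξ j‖ + ‖R e‖ ≤ K := fun j hj hjs => by
    have h₁ : ‖R (e + dh j)‖ ≤ C * (‖e‖ ^ 2 + mh ^ 2) := by
      have hadd : ‖e + dh j‖ ^ 2 ≤ 2 * (‖e‖ ^ 2 + mh ^ 2) := calc
        ‖e + dh j‖ ^ 2 ≤ (‖e‖ + mh) ^ 2 := by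
          gcongr
          exact (norm_add_le _ _).trans (add_le_add le_rfl (hdhb j hj hjs))
        _ ≤ 2 * (‖e‖ ^ 2 + mh ^ 2) := add_sq_le
      calc ‖R (e + dh j)‖ ≤ C / 2 * ‖e + dh j‖ ^ 2 := hRle _
        _ ≤ C / 2 * (2 * (‖e‖ ^ 2 + mh ^ 2)) := by gcongr
        _ = C * (‖e‖ ^ 2 + mh ^ 2) := by ring
    have h₂ : ‖R (d j)‖ ≤ C / 2 * m ^ 2 := by
      refine (hRle _).trans ?_
      gcongr
      exact hdb j hj hjs
    have h₃ : ‖ξ j‖ ≤ M + (‖R (e + dh j)‖ + ‖R (d j)‖) := by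
      rw [hξ]
      exact (norm_add_le _ _).trans (add_le_add (hΔf j hj hjs) (norm_sub_le _ _))
    linarith [hRle e]
  have hKe : ‖R e‖ ≤ K := by
    have : 0 ≤ M + C * (‖e‖ ^ 2 + mh ^ 2) + C / 2 * m ^ 2 := by
      positivity
    linarith [hRle e]
  obtain ⟨g, hg⟩ : ∃ g : ℕ → E, g = fun j => if j = 1 then (μ 1 * Δt) • R e
    else (μ j * Δt) • ξ (j - 1) + (γ j * Δt) • R e := ⟨_, rfl⟩
  have hgle : ∀ j, 1 ≤ j → j ≤ s → ‖g j‖ ≤ μ j * Δt * K := fun j hj hjs => by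
    have hμj := hμpos j hj hjs
    rcases hj.eq_or_lt with rfl | hj
    · simp only [hg, if_true, norm_smul, Real.norm_of_nonneg (mul_pos hμj hΔt).le]
      gcongr
    · simp only [hg, if_neg (show j ≠ 1 by omega)]
      calc _ ≤ ‖(μ j * Δt) • ξ (j - 1)‖ + ‖(γ j * Δt) • R e‖ := norm_add_le _ _
        _ = μ j * Δt * ‖ξ (j - 1)‖ + |γ j| * Δt * ‖R e‖ := by
          rw [norm_smul, norm_smul, Real.norm_of_nonneg (mul_pos hμj hΔt).le, norm_mul,
            Real.norm_eq_abs, Real.norm_of_nonneg hΔt.le]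
        _ ≤ μ j * Δt * ‖ξ (j - 1)‖ + μ j * Δt * ‖R e‖ := by
          gcongr
          exact hγle j hj hjs
        _ = μ j * Δt * (‖ξ (j - 1)‖ + ‖R e‖) := by ring
        _ ≤ μ j * Δt * K := by
          gcongr
          exact hξle (j - 1) (by omega) (by omega)
  have hfe : f yhat = f yn + (L e + R e) := by
    simp [hR, he]
  have herr := rkc_error_eq (L : Module.End ℝ E) W hs hW (fun j hj => (hbpos j hj).ne') hμ1 hμ hν hκ hγ
    e (R e) ξ (fun j => dh j - d j) g (by simp [hd0, hdh0])
    (by simp only [hd1, hdh1, hfe]; module)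
    (fun j hj hjs => by
      have hy : yn + (e + dh (j - 1)) = yhat + dh (j - 1) := by rw [he]; abel
      have hstage : f yhat + Δf (j - 1) =
          f (yn + d (j - 1)) + (L (e + (dh (j - 1) - d (j - 1))) + ξ (j - 1)) := by
        simp only [hξ, hR, hy, map_add, map_sub]
        abel
      simp only [hd j hj hjs, hdh j hj hjs, hstage]
      rw [hfe]
      module)
    (by simp [hg]) (fun j hj _ => by simp [hg, show j ≠ 1 by omega])
  have hsum : ‖∑ i ∈ Finset.Icc 1 s, (b s / b i) •
      chebU (Module.End ℝ E) (s - i) W (g i)‖ ≤ Cs * (Δt * K) := by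
    rw [hCs, Finset.sum_mul]
    refine norm_sum_le_of_le _ fun i hi => ?_
    obtain ⟨h₁, h₂⟩ := Finset.mem_Icc.1 hi
    have hbb : 0 < b s / b i := div_pos (hbpos s le_rfl) (hbpos i h₂)
    rw [norm_smul, Real.norm_of_nonneg hbb.le]
    calc _ ≤ b s / b i * (chebU ℝ (s - i) ω0 * (μ i * Δt * K)) := by
          gcongr
          exact (norm_chebU_apply_le B hWB hω0' hl _ _).trans
            (mul_le_mul_of_nonneg_left (hgle i h₁ h₂) (chebU_nonneg _ hω0'))
      _ = _ := by ring
  have hCs0 : 0 ≤ Cs := by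
    rw [hCs]
    refine Finset.sum_nonneg fun i hi => ?_
    obtain ⟨h₁, h₂⟩ := Finset.mem_Icc.1 hi
    exact mul_nonneg (mul_nonneg (div_pos (hbpos s le_rfl) (hbpos i h₂)).le (chebU_nonneg _ hω0'))
      (hμpos i h₁ h₂).le
  have hdiff : yhat + dh s - (yn + d s) = e + (dh s - d s) := by rw [he]; abel
  rw [hdiff, ← he]
  calc ‖e + (dh s - d s)‖ ≤ ‖e‖ + Cs * (Δt * K) := by
        rw [herr]
        exact (norm_add_le _ _).trans (add_le_add
          (norm_stability_polynomial_apply_le B hWB hω0' hl s (hbpos s le_rfl).le hbT e) hsum)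
    _ ≤ _ := by
        have h₁ : 0 ≤ C * ‖e‖ ^ 2 * Δt := by positivity
        have h₂ : 0 ≤ Cs * C * ‖e‖ ^ 2 * Δt := by positivity
        have h₃ : 0 ≤ Cs * C * m ^ 2 * Δt := by positivity
        rw [hK]
        linarith


/-- error propagation bound for one step of the mixed-precision RKC2 scheme
(first-order-preserving perturbation accuracy) versus the exact RKC2 scheme. -/
theorem mixed_precision_rkc2_error_propagation
    {n : ℕ} (s : ℕ) (hs : 2 ≤ s) (ϑ : ℝ) (hϑ : 0 ≤ ϑ)
    (ω0 ω1 : ℝ) (b μ ν κ γ : ℕ → ℝ)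
    (hω0 : ω0 = 1 + ϑ / (s : ℝ) ^ 2)
    (hω1 : ω1 = deriv (fun x => chebT ℝ s x) ω0 / deriv (deriv (fun x => chebT ℝ s x)) ω0)
    (hb : ∀ j, 2 ≤ j → j ≤ s →
      b j = deriv (deriv (fun x => chebT ℝ j x)) ω0 / (deriv (fun x => chebT ℝ j x) ω0) ^ 2)
    (hb0 : b 0 = b 2) (hb1 : b 1 = b 2)
    (hμ1 : μ 1 = b 1 * ω1)
    (hμ : ∀ j, 2 ≤ j → j ≤ s → μ j = 2 * ω1 * b j / b (j - 1))
    (hν : ∀ j, 2 ≤ j → j ≤ s → ν j = 2 * ω0 * b j / b (j - 1))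
    (hκ : ∀ j, 2 ≤ j → j ≤ s → κ j = -(b j / b (j - 2)))
    (hγ : ∀ j, 2 ≤ j → j ≤ s → γ j = -(μ j * (1 - b (j - 1) * chebT ℝ (j - 1) ω0)))
    (Cs : ℝ) (hCs : Cs = ∑ j ∈ Finset.Icc 1 s, b s / b j * chebU ℝ (s - j) ω0 * μ j)
    (f : EuclideanSpace ℝ (Fin n) → EuclideanSpace ℝ (Fin n))
    (hf : ContDiff ℝ 2 f)
    (Cf'' : ℝ) (hCf'' : ∀ x, ‖iteratedFDeriv ℝ 2 f x‖ ≤ Cf'')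
    (yn yhat : EuclideanSpace ℝ (Fin n)) (Δt : ℝ) (hΔt : 0 < Δt)
    (J : Matrix (Fin n) (Fin n) ℝ) (hJsymm : J.IsHermitian)
    (hJ : HasFDerivAt f ((Matrix.toEuclideanLin J).toContinuousLinearMap) yn)
    (ρ : ℝ) (hρ : 0 ≤ ρ) (heig : ∀ i, hJsymm.eigenvalues i ∈ Set.Icc (-ρ) 0)
    (hstab : Δt * ρ ≤ 2 * ω0 / ω1)
    -- exact RKC2 step
    (d : ℕ → EuclideanSpace ℝ (Fin n))
    (hd0 : d 0 = 0) (hd1 : d 1 = (μ 1 * Δt) • f yn)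
    (hd : ∀ j, 2 ≤ j → j ≤ s →
      d j = ν j • d (j - 1) + κ j • d (j - 2) + (μ j * Δt) • f (yn + d (j - 1))
        + (γ j * Δt) • f yn)
    (yn' : EuclideanSpace ℝ (Fin n)) (hyn' : yn' = yn + d s)
    -- mixed-precision RKC2 step
    (Δf : ℕ → EuclideanSpace ℝ (Fin n))
    (dh : ℕ → EuclideanSpace ℝ (Fin n))
    (hdh0 : dh 0 = 0) (hdh1 : dh 1 = (μ 1 * Δt) • f yhat)
    (hdh : ∀ j, 2 ≤ j → j ≤ s →
      dh j = ν j • dh (j - 1) + κ j • dh (j - 2) + (μ j * Δt) • (f yhat + Δf (j - 1))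
        + (γ j * Δt) • f yhat)
    (yhat' : EuclideanSpace ℝ (Fin n)) (hyhat' : yhat' = yhat + dh s)
    -- assumptions on the perturbations and internal stages
    (Chat ε CΔ Cd : ℝ) (hChat : 0 ≤ Chat) (hε : 0 ≤ ε) (hCΔ : 0 ≤ CΔ) (hCd : 0 ≤ Cd)
    (hΔf : ∀ j, 1 ≤ j → j ≤ s - 1 →
      ‖Δf j - (f (yhat + dh j) - f yhat)‖ ≤ min (Chat * ε * Δt) (CΔ * ‖yhat‖))
    (hdhb : ∀ j, 1 ≤ j → j ≤ s - 1 →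
      ‖dh j‖ ≤ Cd * min (Δt * ‖f yhat‖) ‖yhat‖)
    (hdb : ∀ j, 1 ≤ j → j ≤ s - 1 →
      ‖d j‖ ≤ Cd * min (Δt * ‖f yn‖) ‖yn‖) :
    ‖yhat' - yn'‖ ≤ ‖yhat - yn‖ + Cf'' * (1 + 2 * Cs) * ‖yhat - yn‖ ^ 2 * Δt
      + Cs * min (Chat * ε * Δt) (CΔ * ‖yhat‖) * Δt
      + Cs * Cf'' * Cd ^ 2 *
          ((min (Δt * ‖f yhat‖) ‖yhat‖) ^ 2 + (min (Δt * ‖f yn‖) ‖yn‖) ^ 2) * Δt := by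
  have hω0' : 1 ≤ ω0 := by rw [hω0]; linarith [show 0 ≤ ϑ / (s : ℝ) ^ 2 by positivity]
  obtain ⟨hω1', hbpos, hbT, hμpos, hγle⟩ :=
    rkc2_coefficient_bounds hs hω0' hω1 hb hb0 hb1 hμ1 hμ hγ
  have hl : ∀ i, |ω0 + ω1 * Δt * hJsymm.eigenvalues i| ≤ ω0 := fun i => by
    obtain ⟨h₁, h₂⟩ := heig i
    have h₃ := (le_div_iff₀ hω1').1 hstab
    have h₄ : 0 < ω1 * Δt := mul_pos hω1' hΔt
    rw [abs_le]
    constructor <;> nlinarith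
  rw [hyhat', hyn']
  refine (rkc_step_error_le (by omega) hω0' hΔt hbpos (hbT s (by omega) le_rfl) hμpos hγle hμ1 hμ
    hν hκ hγ hCs hf hCf'' hJ hJsymm.eigenvectorBasis (inner_eigenvectorBasis_toEuclideanLin hJsymm)
    hl hd0 hd1 hd hdh0 hdh1 hdh (by positivity) hΔf hdhb hdb).trans_eq ?_
  ring
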